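/- arXiv:2512.05466 — 3 statements merged into one kernel-verified Lean document; each statement's English description precedes it below -/
import Mathlib

section
/- Let ℓ > 0 and let ℓ' ≥ ℓ be such that ξ(ℓ') = ξ(ℓ−) and ξ(u) ≥ ξ(ℓ−) for every u ∈ [ℓ, ℓ'], where ξ(ℓ−) denotes the left limit of ξ at ℓ. Then for every sequence (ℓ_n) with ℓ_n < ℓ for all n and ℓ_n → ℓ, one has D^u(ℓ_n, ℓ') → 0 as n → ∞. -/
/-! For `u n` close to `ℓ`, the values of `ξ` on `[u n, ℓ)` are close to the left limit `ξm`,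
while `ξ ≥ ξm` on `[ℓ, ℓ']` with equality at `ℓ'`. Hence `ξ (u n)`, `ξ ℓ'` and the infimum of `ξ`
over `[u n, ℓ']` are all close to `ξm`, and they cancel in `Du ξ (u n) ℓ'`. -/

open Set Filter

/-- `D^u(ℓ₁,ℓ₂) = ξ(ℓ₁) + ξ(ℓ₂) − 2·inf{ξ(ℓ) : min(ℓ₁,ℓ₂) ≤ ℓ ≤ max(ℓ₁,ℓ₂)}`. -/
noncomputable def Du (ξ : ℝ → ℝ) (ℓ₁ ℓ₂ : ℝ) : ℝ :=
  ξ ℓ₁ + ξ ℓ₂ - 2 * sInf (ξ '' Icc (min ℓ₁ ℓ₂) (max ℓ₁ ℓ₂))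

/-- Let `ξ` be càdlàg, `ℓ > 0` with left limit `ξm` at `ℓ`, and `ℓ' ≥ ℓ` with
`ξ(ℓ') = ξm` and `ξ ≥ ξm` on `[ℓ,ℓ']`. Then for every sequence `ℓₙ < ℓ` in
`[0,∞)` with `ℓₙ → ℓ` one has `D^u(ℓₙ, ℓ') → 0`. -/
theorem Du_glue_at_jump (ξ : ℝ → ℝ)
    (hrc : ∀ x ≥ (0 : ℝ), Tendsto ξ (nhdsWithin x (Ici x)) (nhds (ξ x)))
    (ℓ : ℝ) (hℓ : 0 < ℓ) (ξm : ℝ)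
    (hleft : Tendsto ξ (nhdsWithin ℓ (Iio ℓ)) (nhds ξm))
    (ℓ' : ℝ) (hℓ' : ℓ ≤ ℓ') (hval : ξ ℓ' = ξm)
    (hge : ∀ x ∈ Icc ℓ ℓ', ξm ≤ ξ x)
    (u : ℕ → ℝ) (hu0 : ∀ n, 0 ≤ u n) (hult : ∀ n, u n < ℓ)
    (hulim : Tendsto u atTop (nhds ℓ)) :
    Tendsto (fun n => Du ξ (u n) ℓ') atTop (nhds 0) := by
  rw [Metric.tendsto_atTop]
  intro ε hε
  have hnear : ∀ᶠ x in nhdsWithin ℓ (Iio ℓ), dist (ξ x) ξm < ε / 4 :=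
    hleft (Metric.ball_mem_nhds ξm (by linarith))
  obtain ⟨a, ha, hnear⟩ := mem_nhdsLT_iff_exists_Ioo_subset.mp hnear
  obtain ⟨N, hN⟩ := eventually_atTop.mp (hulim.eventually (lt_mem_nhds ha))
  refine ⟨N, fun n hn => ?_⟩
  have hclose : ∀ x, u n ≤ x → x < ℓ → |ξ x - ξm| < ε / 4 := fun x h₁ h₂ => by
    have hx : dist (ξ x) ξm < ε / 4 := hnear ⟨(hN n hn).trans_le h₁, h₂⟩
    rwa [Real.dist_eq] at hx
  have hule : u n ≤ ℓ' := (hult n).le.trans hℓ'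
  -- On `[u n, ℓ)` the left limit bounds `ξ` below; on `[ℓ, ℓ']` the hypothesis `hge` does.
  have hlow : ∀ y ∈ ξ '' Icc (u n) ℓ', ξm - ε / 4 ≤ y := by
    rintro _ ⟨x, hx, rfl⟩
    rcases lt_or_ge x ℓ with h | h
    · linarith [(abs_lt.mp (hclose x hx.1 h)).1]
    · linarith [hge x ⟨h, hx.2⟩]
  have hmem : ξ ℓ' ∈ ξ '' Icc (u n) ℓ' := mem_image_of_mem ξ ⟨hule, le_rfl⟩
  have hinf_ge : ξm - ε / 4 ≤ sInf (ξ '' Icc (u n) ℓ') := le_csInf ⟨_, hmem⟩ hlow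
  -- The infimum is at most the value `ξm` at the endpoint `ℓ'`.
  have hinf_le : sInf (ξ '' Icc (u n) ℓ') ≤ ξm := hval ▸ csInf_le ⟨_, hlow⟩ hmem
  have hun := abs_lt.mp (hclose (u n) le_rfl (hult n))
  rw [Real.dist_eq, sub_zero, Du, min_eq_left hule, max_eq_right hule, hval, abs_lt]
  constructor <;> linarith [hun.1, hun.2]
end

section
/- (a) For every i ∈ I and every t ∈ [s_i, t_i] one has A(t) = A(s_i) + (t − s_i); in particular A(s_i) < A(t_i), and the open intervals (A(s_i), A(t_i)), i ∈ I, are pairwise disjoint. (b) The set 𝒜 = [0,∞) ∖ ⋃_{i∈I} (A(s_i), A(t_i)) equals the image A(𝒪ᶜ) of the complement 𝒪ᶜ = [0,∞) ∖ 𝒪 under A; that is, a point u ∈ [0,∞) lies in no interval (A(s_i), A(t_i)) if and only if u = A(t) for some t ∈ [0,∞) with t ∉ 𝒪. -/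
/-!
The function `A` has increments `A y - A x = Leb(O ∩ (x, y])`, so it is nondecreasing and
1-Lipschitz, and it has slope one on each `[sᵢ, tᵢ]`. Disjoint intervals are ordered, so
monotonicity makes their images disjoint. As `Leb(O) = ∞`, `A` is unbounded, hence by the
intermediate value theorem it maps `[0, ∞)` onto `[0, ∞)`. The description of the image follows:
a preimage of a point outside all `(A sᵢ, A tᵢ)` cannot lie in `O`, because `A` is strictly
increasing on `[sᵢ, tᵢ]`; conversely, by monotonicity, `A x ∈ (A sᵢ, A tᵢ)` forces
`x ∈ (sᵢ, tᵢ)`.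
-/

open Set MeasureTheory


lemma occupation_increment {O : Set ℝ} {x y : ℝ} (hx : 0 ≤ x) (hxy : x ≤ y) :
    (volume (O ∩ Icc 0 y)).toReal
      = (volume (O ∩ Icc 0 x)).toReal + (volume (O ∩ Ioc x y)).toReal := by
  have h1 : volume (O ∩ Icc 0 x) ≠ ⊤ :=
    measure_ne_top_of_subset inter_subset_right (by simp)
  have h2 : volume (O ∩ Ioc x y) ≠ ⊤ :=
    measure_ne_top_of_subset inter_subset_right (by simp)
  rw [← ENNReal.toReal_add h1 h2, ← measure_inter_add_sdiff (O ∩ Icc 0 y)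
    (measurableSet_Iic (a := x))]
  congr 3
  · ext z; simp only [mem_inter_iff, mem_Icc, mem_Iic]; grind
  · ext z; simp only [mem_inter_iff, mem_sdiff, mem_Icc, mem_Iic, mem_Ioc]; grind

lemma occupation_le_add {O : Set ℝ} {x y : ℝ} (hx : 0 ≤ x) (hxy : x ≤ y) :
    (volume (O ∩ Icc 0 y)).toReal ≤ (volume (O ∩ Icc 0 x)).toReal + (y - x) := by
  rw [occupation_increment hx hxy]
  have : (volume (O ∩ Ioc x y)).toReal ≤ (volume (Ioc x y)).toReal :=
    ENNReal.toReal_mono (by simp) (measure_mono inter_subset_right)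
  rw [Real.volume_Ioc, ENNReal.toReal_ofReal (by linarith)] at this
  linarith

lemma occupation_mono (O : Set ℝ) : Monotone fun x : ℝ => (volume (O ∩ Icc 0 x)).toReal := by
  intro x y hxy
  refine ENNReal.toReal_mono (measure_ne_top_of_subset inter_subset_right (by simp)) ?_
  exact measure_mono (inter_subset_inter_right _ (Icc_subset_Icc_right hxy))

lemma occupation_continuousOn (O : Set ℝ) :
    ContinuousOn (fun x : ℝ => (volume (O ∩ Icc 0 x)).toReal) (Ici 0) := by
  refine (LipschitzOnWith.of_le_add (f := fun x : ℝ => (volume (O ∩ Icc 0 x)).toReal)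
    (s := Ici 0) ?_).continuousOn
  intro x hx y hy
  rcases le_total x y with h | h
  · exact (occupation_mono O h).trans (le_add_of_nonneg_right dist_nonneg)
  · rw [Real.dist_eq, abs_of_nonneg (sub_nonneg.2 h)]
    exact occupation_le_add hy h

lemma occupation_unbounded {O : Set ℝ} (hO : O ⊆ Ici 0) (hinf : volume O = ⊤) {u : ℝ}
    (hu : 0 ≤ u) :
    ∃ n : ℕ, u < (volume (O ∩ Icc 0 (n : ℝ))).toReal := by
  have hU : ⋃ n : ℕ, O ∩ Icc 0 (n : ℝ) = O := by
    refine Subset.antisymm (iUnion_subset fun n => inter_subset_left) fun x hx => ?_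
    obtain ⟨n, hn⟩ := exists_nat_ge x
    exact mem_iUnion.2 ⟨n, hx, hO hx, hn⟩
  have hmono : Monotone fun n : ℕ => O ∩ Icc 0 (n : ℝ) := fun m n h =>
    inter_subset_inter_right _ (Icc_subset_Icc_right (by exact_mod_cast h))
  have ht := tendsto_measure_iUnion_atTop (μ := volume) hmono
  rw [hU, hinf] at ht
  obtain ⟨n, hn⟩ := (ht.eventually (lt_mem_nhds (ENNReal.ofReal_lt_top (r := u)))).exists
  exact ⟨n, (ENNReal.ofReal_lt_iff_lt_toReal hu
    (measure_ne_top_of_subset inter_subset_right (by simp))).1 hn⟩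

lemma occupation_surjOn {O : Set ℝ} (hO : O ⊆ Ici 0) (hinf : volume O = ⊤) :
    SurjOn (fun x : ℝ => (volume (O ∩ Icc 0 x)).toReal) (Ici 0) (Ici 0) := by
  intro u hu
  obtain ⟨n, hn⟩ := occupation_unbounded hO hinf hu
  have h0 : (volume (O ∩ Icc 0 (0 : ℝ))).toReal = 0 := by
    rw [measure_mono_null inter_subset_right (by simp)]; rfl
  obtain ⟨x, hx, hxu⟩ := intermediate_value_Icc (Nat.cast_nonneg (α := ℝ) n)
    ((occupation_continuousOn O).mono Icc_subset_Ici_self) ⟨h0.le.trans hu, hn.le⟩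
  exact ⟨x, hx.1, hxu⟩

/-- Let `(sᵢ, tᵢ)`, `i ∈ I`, be pairwise disjoint nonempty open intervals in `[0,∞)`
whose union `𝒪` has infinite Lebesgue measure, and let `A(x) = Leb(𝒪 ∩ [0,x])`.
(a) For every `i` and `x ∈ [sᵢ, tᵢ]`, `A(x) = A(sᵢ) + (x − sᵢ)`; in particular
`A(sᵢ) < A(tᵢ)` and the intervals `(A(sᵢ), A(tᵢ))` are pairwise disjoint.
(b) `𝒜 = [0,∞) ∖ ⋃ᵢ (A(sᵢ), A(tᵢ))` equals the image of `[0,∞) ∖ 𝒪` under `A`. -/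
theorem occupation_time_change {I : Type*} [Countable I] (s t : I → ℝ)
    (hs : ∀ i, 0 ≤ s i) (hst : ∀ i, s i < t i)
    (hdisj : Pairwise fun i j => Disjoint (Ioo (s i) (t i)) (Ioo (s j) (t j)))
    (O : Set ℝ) (hO : O = ⋃ i, Ioo (s i) (t i))
    (hinf : volume O = ⊤)
    (A : ℝ → ℝ) (hA : ∀ x : ℝ, A x = (volume (O ∩ Icc 0 x)).toReal) :
    (∀ i, ∀ x ∈ Icc (s i) (t i), A x = A (s i) + (x - s i)) ∧
    (∀ i, A (s i) < A (t i)) ∧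
    (Pairwise fun i j => Disjoint (Ioo (A (s i)) (A (t i))) (Ioo (A (s j)) (A (t j)))) ∧
    (Ici (0 : ℝ) \ ⋃ i, Ioo (A (s i)) (A (t i)) = A '' (Ici (0 : ℝ) \ O)) := by
  have hmono : Monotone A := by
    rw [funext hA]; exact occupation_mono O
  have hO0 : O ⊆ Ici 0 := by
    rw [hO]; exact iUnion_subset fun i x hx => (hs i).trans hx.1.le
  have ha : ∀ i, ∀ x ∈ Icc (s i) (t i), A x = A (s i) + (x - s i) := by
    intro i x hx
    rw [hA, hA, occupation_increment (hs i) hx.1]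
    have hle := sub_nonneg.2 hx.1
    -- Up to the possible endpoint `tᵢ`, all of `(sᵢ, x]` lies in `O`.
    have : volume (O ∩ Ioc (s i) x) = ENNReal.ofReal (x - s i) := by
      apply le_antisymm
      · exact (measure_mono inter_subset_right).trans_eq Real.volume_Ioc
      · rw [← Real.volume_Ioo]
        refine measure_mono fun z hz => ⟨?_, hz.1, hz.2.le⟩
        rw [hO]
        exact mem_iUnion.2 ⟨i, hz.1, hz.2.trans_le hx.2⟩
    rw [this, ENNReal.toReal_ofReal hle]
  have hlt : ∀ i, A (s i) < A (t i) := fun i => by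
    rw [ha i (t i) ⟨(hst i).le, le_rfl⟩]; linarith [hst i]
  refine ⟨ha, hlt, ?_, ?_⟩
  · intro i j hij
    have h : Disjoint (Ioo (s i) (t i)) (Ioo (s j) (t j)) := hdisj hij
    rw [Ioo_disjoint_Ioo] at h ⊢
    -- `A` commutes with `min` and `max`, being monotone.
    rw [← hmono.map_min, ← hmono.map_max]
    exact hmono h
  · ext u
    constructor
    · rintro ⟨hu, hnot⟩
      obtain ⟨x, hx, hxu⟩ := occupation_surjOn hO0 hinf hu
      have hxu : A x = u := (hA x).trans hxu
      refine ⟨x, ⟨hx, fun hxO => hnot ?_⟩, hxu⟩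
      rw [hO] at hxO
      obtain ⟨i, hi⟩ := mem_iUnion.1 hxO
      have h1 := ha i x (Ioo_subset_Icc_self hi)
      have h2 := ha i (t i) ⟨(hst i).le, le_rfl⟩
      exact mem_iUnion.2 ⟨i, by linarith [hi.1], by linarith [hi.2]⟩
    · rintro ⟨x, ⟨-, hxO⟩, rfl⟩
      refine ⟨?_, fun h => hxO ?_⟩
      · rw [hA]; exact ENNReal.toReal_nonneg
      · obtain ⟨i, hi⟩ := mem_iUnion.1 h
        rw [hO]
        exact mem_iUnion.2 ⟨i, hmono.reflect_lt hi.1, hmono.reflect_lt hi.2⟩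
end

section
/- (a) Assume that for every t ∈ [0,∞) ∖ 𝒪 there exists t' in the closure of {s_i : i ∈ I} with A(t') = A(t). Then the closed set 𝒜 = [0,∞) ∖ ⋃_{i∈I} (A(s_i), A(t_i)) equals the closure of {A(s_i) : i ∈ I}. (b) Likewise, if for every t ∈ [0,∞) ∖ 𝒪 there exists t' in the closure of {t_i : i ∈ I} with A(t') = A(t), then 𝒜 equals the closure of {A(t_i) : i ∈ I}. -/
/-! `A` is nondecreasing, 1-Lipschitz, unbounded, vanishes at `0`, and is strictly increasing
on each `[sᵢ, tᵢ]`; these facts are all that is used about it.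

Every `a ≥ 0` is `A x` for some `x ≥ 0` by the intermediate value theorem. If `a ∈ 𝒜`, then
`x ∉ 𝒪`, by strict monotonicity on `[sᵢ, tᵢ]`; the hypothesis then replaces `x` by
a point of the closure of the endpoints, and continuity of `A` puts `a` in the closure of their
images. Conversely `𝒜` is closed, and it contains the image of every endpoint: by monotonicity,
an endpoint with image in `(A(sᵢ), A(tᵢ))` would lie in `(sᵢ, tᵢ)`, which forces two of the
disjoint intervals to overlap. -/

open Set MeasureTheory

lemma volume_inter_Icc_ne_top (O : Set ℝ) (x : ℝ) : volume (O ∩ Icc 0 x) ≠ ⊤ :=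
  measure_ne_top_of_subset inter_subset_right measure_Icc_lt_top.ne

lemma local_time_mono {O : Set ℝ} {A : ℝ → ℝ}
    (hA : ∀ x : ℝ, A x = (volume (O ∩ Icc 0 x)).toReal) : Monotone A := by
  intro x y hxy
  rw [hA, hA]
  exact ENNReal.toReal_mono (volume_inter_Icc_ne_top O y)
    (measure_mono (inter_subset_inter_right _ (Icc_subset_Icc_right hxy)))

lemma local_time_le_add {O : Set ℝ} {A : ℝ → ℝ}
    (hA : ∀ x : ℝ, A x = (volume (O ∩ Icc 0 x)).toReal)
    {x y : ℝ} (hxy : x ≤ y) : A y ≤ A x + (y - x) := by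
  have h : volume (O ∩ Icc 0 y) ≤ volume (O ∩ Icc 0 x) + ENNReal.ofReal (y - x) := by
    rw [← Real.volume_Icc]
    refine (measure_mono ?_).trans (measure_union_le _ _)
    rintro z ⟨hz, hz0, hzy⟩
    rcases le_total z x with hzx | hzx
    · exact Or.inl ⟨hz, hz0, hzx⟩
    · exact Or.inr ⟨hzx, hzy⟩
  rw [hA, hA]
  have h' := ENNReal.toReal_mono
    (ENNReal.add_ne_top.2 ⟨volume_inter_Icc_ne_top O x, ENNReal.ofReal_ne_top⟩) h
  rwa [ENNReal.toReal_add (volume_inter_Icc_ne_top O x) ENNReal.ofReal_ne_top,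
    ENNReal.toReal_ofReal (sub_nonneg.2 hxy)] at h'

lemma local_time_continuous {O : Set ℝ} {A : ℝ → ℝ}
    (hA : ∀ x : ℝ, A x = (volume (O ∩ Icc 0 x)).toReal) : Continuous A := by
  have h : LipschitzWith 1 A := LipschitzWith.of_le_add fun x y => by
    rcases le_total x y with hxy | hxy
    · exact (local_time_mono hA hxy).trans (le_add_of_nonneg_right dist_nonneg)
    · rw [Real.dist_eq, abs_of_nonneg (sub_nonneg.2 hxy)]
      exact local_time_le_add hA hxy
  exact h.continuous

lemma local_time_lt {O : Set ℝ} {A : ℝ → ℝ}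
    (hA : ∀ x : ℝ, A x = (volume (O ∩ Icc 0 x)).toReal)
    {x y : ℝ} (hx : 0 ≤ x) (hxy : x < y) (h : Ioo x y ⊆ O) : A x < A y := by
  have hd : Disjoint (O ∩ Icc 0 x) (Ioo x y) :=
    disjoint_left.2 fun z hz hz' => (hz.2.2.trans_lt hz'.1).false
  have hle : volume (O ∩ Icc 0 x) + ENNReal.ofReal (y - x) ≤ volume (O ∩ Icc 0 y) := by
    rw [← Real.volume_Ioo, ← measure_union hd measurableSet_Ioo]
    refine measure_mono (union_subset ?_ ?_)
    · exact inter_subset_inter_right _ (Icc_subset_Icc_right hxy.le)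
    · exact fun z hz => ⟨h hz, hx.trans hz.1.le, hz.2.le⟩
  have h' := ENNReal.toReal_mono (volume_inter_Icc_ne_top O y) hle
  rw [ENNReal.toReal_add (volume_inter_Icc_ne_top O x) ENNReal.ofReal_ne_top,
    ENNReal.toReal_ofReal (sub_nonneg.2 hxy.le), ← hA, ← hA] at h'
  linarith

/-- If `A` stayed below `a` at all integers, continuity of measure from below would bound the
volume of `O`. -/
lemma local_time_unbounded {O : Set ℝ} {A : ℝ → ℝ}
    (hA : ∀ x : ℝ, A x = (volume (O ∩ Icc 0 x)).toReal)
    (hO : O ⊆ Ici 0) (hinf : volume O = ⊤) (a : ℝ) :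
    ∃ y, 0 ≤ y ∧ a ≤ A y := by
  by_contra! hlt
  have hU : O = ⋃ n : ℕ, O ∩ Icc 0 (n : ℝ) := by
    ext z
    simp only [mem_iUnion]
    refine ⟨fun hz => ?_, fun ⟨_, hz⟩ => hz.1⟩
    obtain ⟨n, hn⟩ := exists_nat_ge z
    exact ⟨n, hz, hO hz, hn⟩
  have hmono : Monotone fun n : ℕ => O ∩ Icc 0 (n : ℝ) := fun m n hmn =>
    inter_subset_inter_right _ (Icc_subset_Icc_right (Nat.cast_le.2 hmn))
  have hle : volume O ≤ ENNReal.ofReal a := by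
    rw [hU, hmono.measure_iUnion]
    refine iSup_le fun n => ?_
    rw [← ENNReal.ofReal_toReal (volume_inter_Icc_ne_top O n), ← hA]
    exact ENNReal.ofReal_le_ofReal (hlt n n.cast_nonneg).le
  exact ENNReal.ofReal_ne_top (top_le_iff.1 (hinf ▸ hle))

lemma local_time_surj {O : Set ℝ} {A : ℝ → ℝ}
    (hA : ∀ x : ℝ, A x = (volume (O ∩ Icc 0 x)).toReal)
    (hO : O ⊆ Ici 0) (hinf : volume O = ⊤) {a : ℝ} (ha : 0 ≤ a) :
    ∃ x, 0 ≤ x ∧ A x = a := by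
  obtain ⟨y, hy, hay⟩ := local_time_unbounded hA hO hinf a
  have h0 : A 0 = 0 := by
    rw [hA, Icc_self, measure_mono_null inter_subset_right Real.volume_singleton,
      ENNReal.toReal_zero]
  obtain ⟨x, hx, hxa⟩ := intermediate_value_Icc hy (local_time_continuous hA).continuousOn
    ⟨h0.trans_le ha, hay⟩
  exact ⟨x, hx.1, hxa⟩

/-- The common form of both parts: `p` is a family of points whose images under `A` avoid the
intervals `(A(sᵢ), A(tᵢ))`. -/
lemma gasket_eq_closure {I : Type*} {s t p : I → ℝ} (hs : ∀ i, 0 ≤ s i)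
    {O : Set ℝ} (hO : O = ⋃ i, Ioo (s i) (t i)) (hinf : volume O = ⊤)
    {A : ℝ → ℝ} (hA : ∀ x : ℝ, A x = (volume (O ∩ Icc 0 x)).toReal)
    (hp : ∀ i j, A (p j) ∉ Ioo (A (s i)) (A (t i)))
    (h : ∀ x, 0 ≤ x → x ∉ O → ∃ x' ∈ closure (range p), A x' = A x) :
    Ici (0 : ℝ) \ ⋃ i, Ioo (A (s i)) (A (t i)) = closure (range fun i => A (p i)) := by
  have hsub : ∀ i, Ioo (s i) (t i) ⊆ O := fun i =>
    hO ▸ subset_iUnion (fun i => Ioo (s i) (t i)) i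
  have hO0 : O ⊆ Ici 0 := by
    rw [hO]
    exact iUnion_subset fun i z hz => (hs i).trans hz.1.le
  apply Subset.antisymm
  · rintro a ⟨ha0, ha⟩
    obtain ⟨x, hx0, rfl⟩ := local_time_surj hA hO0 hinf ha0
    have hxO : x ∉ O := by
      intro hx
      rw [hO] at hx
      obtain ⟨i, hi⟩ := mem_iUnion.1 hx
      exact ha (mem_iUnion.2 ⟨i,
        local_time_lt hA (hs i) hi.1 ((Ioo_subset_Ioo_right hi.2.le).trans (hsub i)),
        local_time_lt hA hx0 hi.2 ((Ioo_subset_Ioo_left hi.1.le).trans (hsub i))⟩)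
    obtain ⟨x', hx', hxx⟩ := h x hx0 hxO
    rw [← hxx]
    have hm := image_closure_subset_closure_image (local_time_continuous hA)
      (mem_image_of_mem A hx')
    rwa [← range_comp] at hm
  · refine closure_minimal ?_ (isClosed_Ici.sdiff (isOpen_iUnion fun i => isOpen_Ioo))
    rintro _ ⟨j, rfl⟩
    refine ⟨?_, fun hj => ?_⟩
    · simp only [mem_Ici, hA]
      exact ENNReal.toReal_nonneg
    · obtain ⟨i, hi⟩ := mem_iUnion.1 hj
      exact hp i j hi

/-- With `𝒪 = ⋃ᵢ (sᵢ,tᵢ)` a disjoint union of intervals of infinite total measure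
and `A(x) = Leb(𝒪 ∩ [0,x])`, set `𝒜 = [0,∞) ∖ ⋃ᵢ (A(sᵢ), A(tᵢ))`.
(a) If every `x ∈ [0,∞) ∖ 𝒪` admits `x'` in the closure of `{sᵢ}` with `A(x') = A(x)`,
then `𝒜 = closure {A(sᵢ) : i ∈ I}`.
(b) Likewise with the `tᵢ` in place of the `sᵢ`. -/
theorem gasket_set_as_closure {I : Type*} [Countable I] (s t : I → ℝ)
    (hs : ∀ i, 0 ≤ s i) (hst : ∀ i, s i < t i)
    (hdisj : Pairwise fun i j => Disjoint (Ioo (s i) (t i)) (Ioo (s j) (t j)))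
    (O : Set ℝ) (hO : O = ⋃ i, Ioo (s i) (t i))
    (hinf : volume O = ⊤)
    (A : ℝ → ℝ) (hA : ∀ x : ℝ, A x = (volume (O ∩ Icc 0 x)).toReal) :
    ((∀ x, 0 ≤ x → x ∉ O → ∃ x' ∈ closure (range s), A x' = A x) →
      Ici (0 : ℝ) \ ⋃ i, Ioo (A (s i)) (A (t i)) = closure (range fun i => A (s i))) ∧
    ((∀ x, 0 ≤ x → x ∉ O → ∃ x' ∈ closure (range t), A x' = A x) →
      Ici (0 : ℝ) \ ⋃ i, Ioo (A (s i)) (A (t i)) = closure (range fun i => A (t i))) := by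
  have hm := local_time_mono hA
  have hij : ∀ i j, i ≠ j → max (s i) (s j) < min (t i) (t j) → False := by
    intro i j hne hlt
    obtain ⟨z, hz, hz'⟩ := exists_between hlt
    rw [max_lt_iff] at hz
    rw [lt_min_iff] at hz'
    exact disjoint_left.1 (hdisj hne) ⟨hz.1, hz'.1⟩ ⟨hz.2, hz'.2⟩
  refine ⟨gasket_eq_closure hs hO hinf hA fun i j hj => ?_,
    gasket_eq_closure hs hO hinf hA fun i j hj => ?_⟩
  · have hne : i ≠ j := by
      rintro rfl
      exact hj.1.false
    have h1 := hm.reflect_lt hj.1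
    have h2 := hm.reflect_lt hj.2
    exact hij i j hne (max_lt (lt_min (hst i) (h1.trans (hst j))) (lt_min h2 (hst j)))
  · have hne : i ≠ j := by
      rintro rfl
      exact hj.2.false
    have h1 := hm.reflect_lt hj.1
    have h2 := hm.reflect_lt hj.2
    exact hij i j hne (max_lt (lt_min (hst i) h1) (lt_min ((hst j).trans h2) (hst j)))
end
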